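/- Let f : ℝⁿ → ℝⁿ with f(0) = 0 be differentiable at 0 with derivative A, and let G : ℝⁿ → ℝ^{n×m} be continuous at 0 with G(0) = B. Let Q ∈ ℝ^{n×n} and R ∈ ℝ^{m×m} be positive definite, let P ∈ ℝ^{n×n} be a symmetric positive definite matrix satisfying AᵀP + PA − P B R⁻¹ Bᵀ P + Q = 0, set K = R⁻¹BᵀP, V(x) = (1/2)xᵀPx, a(x) = xᵀP f(x), b(x) = xᵀP G(x). Then there exists C > 0 such that the set X_ROA,L = {x ∈ ℝⁿ : x ≠ 0, V(x) ≤ C, a(x) + b(x)(−Kx) < 0} is nonempty, and X_ROA,L is contained in the set X_ROA,S = {x ∈ ℝⁿ : x ≠ 0, V(x) ≤ C, a(x) + b(x)·u_S(x) < 0}, where u_S is the Sontag-type control law. -/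

import Mathlib

open Matrix

/-- The Sontag-type distortion factor
`λ = (a + √(a² + q·(b R⁻¹ bᵀ))) / (b R⁻¹ bᵀ)`, where `q = xᵀQx` is passed in as
a scalar and `b` is a row vector (represented as `Fin m → ℝ`). -/
noncomputable def sontagLambda {m : ℕ} (R : Matrix (Fin m) (Fin m) ℝ)
    (a q : ℝ) (b : Fin m → ℝ) : ℝ :=
  (a + Real.sqrt (a ^ 2 + q * (b ⬝ᵥ R⁻¹ *ᵥ b))) / (b ⬝ᵥ R⁻¹ *ᵥ b)

/-- The Sontag-type control law `u_S = −λ R⁻¹ bᵀ` if `b ≠ 0`, and `u_S = 0` if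
`b = 0`. -/
noncomputable def sontagControl {m : ℕ} (R : Matrix (Fin m) (Fin m) ℝ)
    (a q : ℝ) (b : Fin m → ℝ) : Fin m → ℝ :=
  if b = 0 then 0 else -(sontagLambda R a q b) • (R⁻¹ *ᵥ b)

theorem Matrix.PosDef.dotProduct_mulVec_pos_real {k : ℕ} {M : Matrix (Fin k) (Fin k) ℝ}
    (hM : M.PosDef) {x : Fin k → ℝ} (hx : x ≠ 0) : 0 < x ⬝ᵥ M *ᵥ x := by
  simpa using hM.dotProduct_mulVec_pos hx

theorem add_dotProduct_sontagControl {m : ℕ} {R : Matrix (Fin m) (Fin m) ℝ} (hR : R.PosDef)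
    (a q : ℝ) {b : Fin m → ℝ} (hb : b ≠ 0) :
    a + b ⬝ᵥ sontagControl R a q b = -Real.sqrt (a ^ 2 + q * (b ⬝ᵥ R⁻¹ *ᵥ b)) := by
  have hβ : b ⬝ᵥ R⁻¹ *ᵥ b ≠ 0 := (hR.inv.dotProduct_mulVec_pos_real hb).ne'
  rw [sontagControl, if_neg hb, dotProduct_smul, sontagLambda, smul_eq_mul, neg_mul,
    div_mul_cancel₀ _ hβ]
  ring

/-- Whenever some feedback makes the Lyapunov derivative negative, so does the Sontag-type one. -/
theorem add_dotProduct_sontagControl_neg {m : ℕ} {R : Matrix (Fin m) (Fin m) ℝ} (hR : R.PosDef)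
    {a q : ℝ} {b u : Fin m → ℝ} (hq : 0 < q) (h : a + b ⬝ᵥ u < 0) :
    a + b ⬝ᵥ sontagControl R a q b < 0 := by
  by_cases hb : b = 0
  · subst hb
    simpa using h
  · have hβ := hR.inv.dotProduct_mulVec_pos_real hb
    rw [add_dotProduct_sontagControl hR a q hb, neg_lt_zero]
    positivity

/-- Along a solution of the Riccati equation, the linearized closed loop strictly decreases
the quadratic form of `P`. -/
theorem riccati_closedLoop_neg {n m : ℕ}
    {A P Q : Matrix (Fin n) (Fin n) ℝ} {B : Matrix (Fin n) (Fin m) ℝ}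
    {R : Matrix (Fin m) (Fin m) ℝ} (hQ : Q.PosDef) (hR : R.PosDef) (hP : Pᵀ = P)
    (hRic : Aᵀ * P + P * A - P * B * R⁻¹ * Bᵀ * P + Q = 0) {x : Fin n → ℝ} (hx : x ≠ 0) :
    x ⬝ᵥ P *ᵥ (A *ᵥ x) - x ⬝ᵥ (P * B) *ᵥ ((R⁻¹ * Bᵀ * P) *ᵥ x) < 0 := by
  have hq := hQ.dotProduct_mulVec_pos_real hx
  have hs : 0 ≤ x ⬝ᵥ (P * B) *ᵥ ((R⁻¹ * Bᵀ * P) *ᵥ x) := by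
    have h := hR.inv.posSemidef.dotProduct_mulVec_nonneg ((Bᵀ * P) *ᵥ x)
    have hv : x ᵥ* (P * B) = (Bᵀ * P) *ᵥ x := by
      rw [← mulVec_transpose, transpose_mul, hP]
    rw [dotProduct_mulVec, hv, Matrix.mul_assoc, ← mulVec_mulVec]
    simpa using h
  have hA : x ⬝ᵥ (Aᵀ * P) *ᵥ x = x ⬝ᵥ P *ᵥ (A *ᵥ x) := by
    rw [dotProduct_mulVec, ← mulVec_transpose, transpose_mul, transpose_transpose, hP,
      dotProduct_comm, mulVec_mulVec]
  have hE : x ⬝ᵥ (Aᵀ * P + P * A - P * B * R⁻¹ * Bᵀ * P + Q) *ᵥ x = 0 := by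
    simp [hRic]
  have hB : (P * B) *ᵥ ((R⁻¹ * Bᵀ * P) *ᵥ x) = (P * B * R⁻¹ * Bᵀ * P) *ᵥ x := by
    simp only [mulVec_mulVec, Matrix.mul_assoc]
  rw [hB] at hs ⊢
  simp only [add_mulVec, sub_mulVec, dotProduct_add, dotProduct_sub, hA] at hE
  rw [← mulVec_mulVec x P A] at hE
  linarith

/-- under the hypotheses of the LQR-based CLF design (with
`V(x) = ½xᵀPx`, `a(x) = xᵀP f(x)`, `b(x) = xᵀP G(x)`, `K = R⁻¹BᵀP`), there
exists `C > 0` such that the set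
`X_ROA,L = {x ≠ 0 : V(x) ≤ C, a(x) + b(x)(−Kx) < 0}` is nonempty and contained
in `X_ROA,S = {x ≠ 0 : V(x) ≤ C, a(x) + b(x)·u_S(x) < 0}`, where `u_S` is the
Sontag-type control law. -/
theorem stmt_10 {n m : ℕ} (hn : 0 < n)
    (f : (Fin n → ℝ) → (Fin n → ℝ)) (G : (Fin n → ℝ) → Matrix (Fin n) (Fin m) ℝ)
    (A : Matrix (Fin n) (Fin n) ℝ) (B : Matrix (Fin n) (Fin m) ℝ)
    (hf0 : f 0 = 0)
    (hfA : HasFDerivAt f (LinearMap.toContinuousLinearMap A.mulVecLin) 0)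
    (hGcont : ContinuousAt G 0) (hG0 : G 0 = B)
    (Q : Matrix (Fin n) (Fin n) ℝ) (R : Matrix (Fin m) (Fin m) ℝ)
    (hQ : Q.PosDef) (hR : R.PosDef)
    (P : Matrix (Fin n) (Fin n) ℝ) (hP : P.PosDef) (hPsymm : Pᵀ = P)
    (hRic : Aᵀ * P + P * A - P * B * R⁻¹ * Bᵀ * P + Q = 0)
    (K : Matrix (Fin m) (Fin n) ℝ) (hK : K = R⁻¹ * Bᵀ * P)
    (V : (Fin n → ℝ) → ℝ) (hV : ∀ x, V x = (1 / 2) * (x ⬝ᵥ P *ᵥ x))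
    (a : (Fin n → ℝ) → ℝ) (ha : ∀ x, a x = x ⬝ᵥ P *ᵥ f x)
    (b : (Fin n → ℝ) → (Fin m → ℝ)) (hb : ∀ x, b x = x ᵥ* (P * G x)) :
    ∃ C > 0,
      {x : Fin n → ℝ | x ≠ 0 ∧ V x ≤ C ∧ a x + b x ⬝ᵥ (-(K *ᵥ x)) < 0}.Nonempty ∧
      {x : Fin n → ℝ | x ≠ 0 ∧ V x ≤ C ∧ a x + b x ⬝ᵥ (-(K *ᵥ x)) < 0} ⊆
        {x : Fin n → ℝ | x ≠ 0 ∧ V x ≤ C ∧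
          a x + b x ⬝ᵥ sontagControl R (a x) (x ⬝ᵥ Q *ᵥ x) (b x) < 0} := by
  obtain ⟨v, hv⟩ : ∃ v : Fin n → ℝ, v ≠ 0 := ⟨fun _ => 1, fun h => by
    simpa using congrFun h ⟨0, hn⟩⟩
  have hlim := riccati_closedLoop_neg hQ hR hPsymm hRic hv
  rw [← hK, ← hG0] at hlim
  have hline : HasDerivAt (fun t : ℝ => f (t • v)) (A *ᵥ v) 0 := by
    have hl : HasDerivAt (fun t : ℝ => t • v) v 0 := by
      simpa using (hasDerivAt_id (0 : ℝ)).smul_const v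
    rw [← zero_smul ℝ v] at hfA
    simpa [Function.comp_def] using hfA.comp_hasDerivAt (0 : ℝ) hl
  have hslope : Filter.Tendsto (fun t : ℝ => t⁻¹ • f (t • v)) (nhdsWithin 0 {0}ᶜ)
      (nhds (A *ᵥ v)) := by
    simpa [hf0] using hline.tendsto_slope_zero
  have hG : Filter.Tendsto (fun t : ℝ => G (t • v)) (nhdsWithin 0 {0}ᶜ) (nhds (G 0)) := by
    have hl : Filter.Tendsto (fun t : ℝ => t • v) (nhds 0) (nhds 0) := by
      have hc : Continuous fun t : ℝ => t • v := by fun_prop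
      simpa using hc.tendsto 0
    exact (hGcont.tendsto.comp hl).mono_left nhdsWithin_le_nhds
  have hcont : Continuous fun p : (Fin n → ℝ) × Matrix (Fin n) (Fin m) ℝ =>
      v ⬝ᵥ P *ᵥ p.1 - v ⬝ᵥ (P * p.2) *ᵥ (K *ᵥ v) := by fun_prop
  have hneg := ((hcont.tendsto (A *ᵥ v, G 0)).comp (hslope.prodMk_nhds hG)).eventually_lt_const
    hlim
  obtain ⟨t, ht, ht0⟩ := (hneg.and self_mem_nhdsWithin).exists
  have ht0 : t ≠ 0 := ht0
  have hx : t • v ≠ 0 := smul_ne_zero ht0 hv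
  refine ⟨V (t • v), ?_, ⟨t • v, hx, le_rfl, ?_⟩, ?_⟩
  · have := hP.dotProduct_mulVec_pos_real hx
    rw [hV]
    positivity
  · have hscale : a (t • v) + b (t • v) ⬝ᵥ (-(K *ᵥ (t • v))) =
        t ^ 2 * (v ⬝ᵥ P *ᵥ (t⁻¹ • f (t • v)) - v ⬝ᵥ (P * G (t • v)) *ᵥ (K *ᵥ v)) := by
      rw [ha, hb, ← dotProduct_mulVec]
      simp only [mulVec_smul, mulVec_neg, dotProduct_neg, dotProduct_smul, smul_dotProduct,
        smul_eq_mul]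
      field_simp
      ring
    rw [hscale]
    exact mul_neg_of_pos_of_neg (by positivity) ht
  · rintro x ⟨hx0, hVx, hneg⟩
    exact ⟨hx0, hVx, add_dotProduct_sontagControl_neg hR (hQ.dotProduct_mulVec_pos_real hx0) hneg⟩
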